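/- Proposition 1: For every n ≥ 3 and every n-qubit density matrix ρ (pure or mixed), the sum of squared bipartite correlations over all pairs satisfies M(ρ) = Σ_{1≤k<l≤n} M_{kl}(ρ) ≤ C(n,2) = n(n-1)/2. -/

import Mathlib

noncomputable def pauli : ℕ → Matrix (Fin 2) (Fin 2) ℂ
  | 1 => !![0, 1; 1, 0]
  | 2 => !![0, -Complex.I; Complex.I, 0]
  | 3 => !![1, 0; 0, -1]
  | _ => 1

/-- The `ι`-fold Kronecker product of single-qubit operators `pauli (f k)`. -/
noncomputable def kronOp {ι : Type*} [Fintype ι] [DecidableEq ι] (f : ι → ℕ) :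
    Matrix (ι → Fin 2) (ι → Fin 2) ℂ :=
  Matrix.of fun x y => ∏ k, pauli (f k) (x k) (y k)

/-- Two-body correlation `T^{kl}_{ij}(ρ)`. -/
noncomputable def corr {ι : Type*} [Fintype ι] [DecidableEq ι]
    (ρ : Matrix (ι → Fin 2) (ι → Fin 2) ℂ) (k l : ι) (i j : ℕ) : ℝ :=
  ((ρ * kronOp (fun q => if q = k then i else if q = l then j else 0)).trace).re

/-- Single-qubit Bloch vector component `b^{(q)}_i(ρ)`. -/
noncomputable def bloch {ι : Type*} [Fintype ι] [DecidableEq ι]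
    (ρ : Matrix (ι → Fin 2) (ι → Fin 2) ℂ) (q : ι) (i : ℕ) : ℝ :=
  ((ρ * kronOp (fun p => if p = q then i else 0)).trace).re

/-- `M_{kl}(ρ)`. -/
noncomputable def Mkl {ι : Type*} [Fintype ι] [DecidableEq ι]
    (ρ : Matrix (ι → Fin 2) (ι → Fin 2) ℂ) (k l : ι) : ℝ :=
  ∑ i ∈ Finset.Icc 1 2, ∑ j ∈ Finset.Icc 1 2, (corr ρ k l i j) ^ 2

/-- `M(ρ) = Σ_{k<l} M_{kl}(ρ)`. -/
noncomputable def Mtot {ι : Type*} [Fintype ι] [LinearOrder ι]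
    (ρ : Matrix (ι → Fin 2) (ι → Fin 2) ℂ) : ℝ :=
  ∑ p ∈ Finset.univ.filter (fun p : ι × ι => p.1 < p.2), Mkl ρ p.1 p.2

/-- Density matrix of a pure state `ψ`: `ρ_ψ = ψ ψ†`. -/
noncomputable def pureDensity {ι : Type*} [Fintype ι] [DecidableEq ι]
    (ψ : (ι → Fin 2) → ℂ) : Matrix (ι → Fin 2) (ι → Fin 2) ℂ :=
  Matrix.of fun x y => ψ x * (starRingEnd ℂ) (ψ y)

/-- `ψ` is a unit vector. -/
def UnitVec {ι : Type*} [Fintype ι] [DecidableEq ι] (ψ : (ι → Fin 2) → ℂ) : Prop :=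
  ∑ x, Complex.normSq (ψ x) = 1

/-- Preferred-basis condition: all transverse Bloch components vanish. -/
def PreferredBasis {ι : Type*} [Fintype ι] [DecidableEq ι]
    (ρ : Matrix (ι → Fin 2) (ι → Fin 2) ℂ) : Prop :=
  ∀ q : ι, bloch ρ q 1 = 0 ∧ bloch ρ q 2 = 0

open scoped ComplexOrder

lemma pauli_sq (i : ℕ) : pauli i * pauli i = 1 := by
  unfold pauli
  split <;> ext a b <;> fin_cases a <;> fin_cases b <;> simp [Matrix.mul_apply]

lemma pauli_herm (i : ℕ) (a b : Fin 2) : star (pauli i b a) = pauli i a b := by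
  unfold pauli
  split <;> fin_cases a <;> fin_cases b <;> simp

lemma pauli_anti : pauli 1 * pauli 2 = - (pauli 2 * pauli 1) := by
  unfold pauli
  ext a b; fin_cases a <;> fin_cases b <;> simp [Matrix.mul_apply]

lemma pauli_zero : pauli 0 = 1 := by
  unfold pauli
  rfl

section
variable {ι : Type*} [Fintype ι] [DecidableEq ι]

lemma kronOp_mul_apply (f g : ι → ℕ) (x y : ι → Fin 2) :
    (kronOp f * kronOp g) x y = ∏ k, (pauli (f k) * pauli (g k)) (x k) (y k) := by
  simp only [Matrix.mul_apply, kronOp, Matrix.of_apply, ← Finset.prod_mul_distrib]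
  rw [Fintype.prod_sum]

lemma kronOp_sq (f : ι → ℕ) : kronOp f * kronOp f = 1 := by
  ext x y
  rw [kronOp_mul_apply]
  simp only [pauli_sq, Matrix.one_apply]
  rw [Finset.prod_ite_zero]
  simp [funext_iff]

lemma kronOp_herm (f : ι → ℕ) : (kronOp f).conjTranspose = kronOp f := by
  ext x y
  simp only [Matrix.conjTranspose_apply, kronOp, Matrix.of_apply, star_prod, pauli_herm]

lemma kronOp_anti (f g : ι → ℕ) (q : ι)
    (hq : (f q = 1 ∧ g q = 2) ∨ (f q = 2 ∧ g q = 1))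
    (h : ∀ k, k ≠ q → f k = g k ∨ f k = 0 ∨ g k = 0) :
    kronOp g * kronOp f = - (kronOp f * kronOp g) := by
  ext x y
  rw [Matrix.neg_apply, kronOp_mul_apply, kronOp_mul_apply,
    ← Finset.mul_prod_erase _ _ (Finset.mem_univ q), ← Finset.mul_prod_erase _ _ (Finset.mem_univ q),
    ← neg_mul]
  congr 1
  · rcases hq with ⟨h1, h2⟩ | ⟨h1, h2⟩
    · rw [h1, h2, pauli_anti]; simp
    · rw [h1, h2, pauli_anti]; simp
  · refine Finset.prod_congr rfl fun k hk => ?_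
    rcases h k (Finset.ne_of_mem_erase hk) with h | h | h
    · rw [h]
    · rw [h, pauli_zero]; simp
    · rw [h, pauli_zero]; simp

lemma four_anti {m : Type*} [Fintype m] [DecidableEq m] (ρ A B C D : Matrix m m ℂ)
    (hρ : ρ.PosSemidef) (hTr : ρ.trace = 1)
    (hA : A.conjTranspose = A) (hB : B.conjTranspose = B)
    (hC : C.conjTranspose = C) (hD : D.conjTranspose = D)
    (sA : A * A = 1) (sB : B * B = 1) (sC : C * C = 1) (sD : D * D = 1)
    (AB : B * A = -(A * B)) (AC : C * A = -(A * C)) (AD : D * A = -(A * D))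
    (BC : C * B = -(B * C)) (BD : D * B = -(B * D)) (CD : D * C = -(C * D)) :
    (ρ * A).trace.re ^ 2 + (ρ * B).trace.re ^ 2 + (ρ * C).trace.re ^ 2
      + (ρ * D).trace.re ^ 2 ≤ 1 := by
  obtain ⟨a, ha⟩ : ∃ a, a = (ρ * A).trace.re := ⟨_, rfl⟩
  obtain ⟨b, hb⟩ : ∃ b, b = (ρ * B).trace.re := ⟨_, rfl⟩
  obtain ⟨c, hc⟩ : ∃ c, c = (ρ * C).trace.re := ⟨_, rfl⟩
  obtain ⟨d, hd⟩ : ∃ d, d = (ρ * D).trace.re := ⟨_, rfl⟩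
  obtain ⟨T, hT⟩ : ∃ T : Matrix m m ℂ, T = 1 - (a : ℂ) • A - (b : ℂ) • B - (c : ℂ) • C - (d : ℂ) • D :=
    ⟨_, rfl⟩
  have hTh : T.conjTranspose = T := by
    rw [hT]; simp [Matrix.conjTranspose_sub, Matrix.conjTranspose_smul, hA, hB, hC, hD]
  have hTT : T * T = ((1 + a^2 + b^2 + c^2 + d^2 : ℝ) : ℂ) • (1 : Matrix m m ℂ)
      - (2 * a : ℂ) • A - (2 * b : ℂ) • B - (2 * c : ℂ) • C - (2 * d : ℂ) • D := by
    rw [hT]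
    simp only [sub_mul, mul_sub, one_mul, mul_one, smul_mul_assoc, mul_smul_comm, sA, sB, sC, sD,
      AB, AC, AD, BC, BD, CD]
    push_cast
    module
  have h0 := (hρ.mul_mul_conjTranspose_same T).trace_nonneg
  rw [hTh, mul_assoc, Matrix.trace_mul_comm, mul_assoc, hTT] at h0
  have h1 := (Complex.le_def.1 h0).1
  simp only [mul_sub, mul_smul_comm, mul_one, Matrix.trace_sub, Matrix.trace_smul, hTr,
    smul_eq_mul, Complex.sub_re, Complex.ofReal_re, Complex.zero_re] at h1
  have e : ∀ (t : ℝ) (z : ℂ), (2 * (t : ℂ) * z).re = 2 * t * z.re := by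
    intro t z; simp
  rw [e, e, e, e, ← ha, ← hb, ← hc, ← hd] at h1
  rw [← ha, ← hb, ← hc, ← hd]
  nlinarith

lemma corr_four (ρ : Matrix (ι → Fin 2) (ι → Fin 2) ℂ) (hρ : ρ.PosSemidef) (hTr : ρ.trace = 1)
    (a b c : ι) (hab : a ≠ b) (hac : a ≠ c) (hbc : b ≠ c) (i j : ℕ)
    (hij : (i = 1 ∧ j = 2) ∨ (i = 2 ∧ j = 1)) :
    corr ρ a b i 1 ^ 2 + corr ρ a b i 2 ^ 2 + corr ρ a c j 1 ^ 2 + corr ρ a c j 2 ^ 2 ≤ 1 := by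
  unfold corr
  refine four_anti ρ _ _ _ _ hρ hTr (kronOp_herm _) (kronOp_herm _) (kronOp_herm _) (kronOp_herm _)
    (kronOp_sq _) (kronOp_sq _) (kronOp_sq _) (kronOp_sq _)
    (kronOp_anti _ _ b ?_ ?_) (kronOp_anti _ _ a ?_ ?_) (kronOp_anti _ _ a ?_ ?_)
    (kronOp_anti _ _ a ?_ ?_) (kronOp_anti _ _ a ?_ ?_) (kronOp_anti _ _ c ?_ ?_) <;> grind

lemma Mkl_eq (ρ : Matrix (ι → Fin 2) (ι → Fin 2) ℂ) (k l : ι) :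
    Mkl ρ k l = corr ρ k l 1 1 ^ 2 + corr ρ k l 1 2 ^ 2 + corr ρ k l 2 1 ^ 2 + corr ρ k l 2 2 ^ 2 := by
  have : Finset.Icc 1 2 = ({1, 2} : Finset ℕ) := by decide
  simp [Mkl, this]; ring

lemma corr_symm (ρ : Matrix (ι → Fin 2) (ι → Fin 2) ℂ) (k l : ι) (h : k ≠ l) (i j : ℕ) :
    corr ρ k l i j = corr ρ l k j i := by
  unfold corr
  congr 4
  funext q
  grind

lemma Mkl_symm (ρ : Matrix (ι → Fin 2) (ι → Fin 2) ℂ) (k l : ι) (h : k ≠ l) :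
    Mkl ρ k l = Mkl ρ l k := by
  rw [Mkl_eq, Mkl_eq, corr_symm ρ k l h, corr_symm ρ k l h, corr_symm ρ k l h, corr_symm ρ k l h]
  ring

lemma Mkl_pair (ρ : Matrix (ι → Fin 2) (ι → Fin 2) ℂ) (hρ : ρ.PosSemidef) (hTr : ρ.trace = 1)
    (a b c : ι) (hab : a ≠ b) (hac : a ≠ c) (hbc : b ≠ c) : Mkl ρ a b + Mkl ρ a c ≤ 2 := by
  have h1 := corr_four ρ hρ hTr a b c hab hac hbc 1 2 (by simp)
  have h2 := corr_four ρ hρ hTr a b c hab hac hbc 2 1 (by simp)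
  rw [Mkl_eq, Mkl_eq]
  linarith

/-- Averaging: pairwise sums at most 2 force the total to be at most the cardinality. -/
lemma sum_le_card_of_pair (s : Finset ι) (hs : 2 ≤ s.card) (f : ι → ℝ)
    (h : ∀ b ∈ s, ∀ c ∈ s, b ≠ c → f b + f c ≤ 2) : ∑ b ∈ s, f b ≤ s.card := by
  by_cases hall : ∀ b ∈ s, f b ≤ 1
  · simpa using Finset.sum_le_sum hall
  · push Not at hall
    obtain ⟨b, hb, hb1⟩ := hall
    obtain ⟨c, hc, hcb⟩ := Finset.exists_mem_ne (by omega : 1 < s.card) b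
    have hc' : c ∈ s.erase b := Finset.mem_erase.2 ⟨hcb, hc⟩
    rw [← Finset.add_sum_erase s f hb, ← Finset.add_sum_erase _ f hc']
    have h1 : ∑ x ∈ (s.erase b).erase c, f x ≤ ∑ x ∈ (s.erase b).erase c, (1 : ℝ) := by
      refine Finset.sum_le_sum fun x hx => ?_
      simp only [Finset.mem_erase] at hx
      have := h b hb x hx.2.2 (Ne.symm hx.2.1)
      linarith
    have h2 := h b hb c hc hcb.symm
    have h3 : ((s.erase b).erase c).card + 2 = s.card := by
      rw [Finset.card_erase_of_mem hc', Finset.card_erase_of_mem hb]; omega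
    rw [← h3]
    push_cast
    simp only [Finset.sum_const, nsmul_eq_mul, mul_one] at h1
    linarith
end

/-- Proposition 1: for any `n`-qubit density matrix (`n ≥ 3`),
`M(ρ) = Σ_{k<l} M_{kl}(ρ) ≤ C(n,2)`. -/
theorem Mtot_le_choose (n : ℕ) (hn : 3 ≤ n)
    (ρ : Matrix (Fin n → Fin 2) (Fin n → Fin 2) ℂ)
    (hρ : ρ.PosSemidef) (hTr : ρ.trace = 1) :
    Mtot ρ ≤ (n.choose 2 : ℝ) := by
  have hrow : ∀ a : Fin n, ∑ b ∈ Finset.univ.erase a, Mkl ρ a b ≤ (n : ℝ) - 1 := by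
    intro a
    have hcard : (Finset.univ.erase a).card = n - 1 := by simp
    have := sum_le_card_of_pair (Finset.univ.erase a) (by omega) (Mkl ρ a)
      (fun b hb c hc hbc => Mkl_pair ρ hρ hTr a b c (Finset.ne_of_mem_erase hb).symm
        (Finset.ne_of_mem_erase hc).symm hbc)
    rw [hcard, Nat.cast_sub (by omega)] at this
    simpa using this
  have htot : ∑ a : Fin n, ∑ b ∈ Finset.univ.erase a, Mkl ρ a b ≤ n * ((n : ℝ) - 1) := by
    refine (Finset.sum_le_sum (fun a (_ : a ∈ Finset.univ) => hrow a)).trans (le_of_eq ?_)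
    rw [Finset.sum_const, Finset.card_univ, Fintype.card_fin, nsmul_eq_mul]
  have e1 : Mtot ρ = ∑ a : Fin n, ∑ b : Fin n, if a < b then Mkl ρ a b else 0 := by
    rw [Mtot, Finset.sum_filter, ← Finset.univ_product_univ, Finset.sum_product]
  have e2 : Mtot ρ = ∑ a : Fin n, ∑ b : Fin n, if b < a then Mkl ρ a b else 0 := by
    rw [e1, Finset.sum_comm]
    refine Finset.sum_congr rfl fun a _ => Finset.sum_congr rfl fun b _ => ?_
    split_ifs with h
    · exact Mkl_symm ρ _ _ h.ne
    · rfl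
  have e3 : ∑ a : Fin n, ∑ b ∈ Finset.univ.erase a, Mkl ρ a b = Mtot ρ + Mtot ρ := by
    conv_rhs => rw [e2]
    nth_rewrite 1 [← e2]
    rw [e1, ← Finset.sum_add_distrib]
    refine Finset.sum_congr rfl fun a _ => ?_
    rw [← Finset.sum_add_distrib, ← Finset.filter_ne', Finset.sum_filter]
    refine Finset.sum_congr rfl fun b _ => ?_
    rcases lt_trichotomy a b with h | h | h
    · simp [h, h.ne', h.not_gt]
    · simp [h]
    · simp [h, h.ne, h.not_gt]
  rw [Nat.cast_choose_two]
  linarith
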